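/- If {α_i} ⊆ ℤ[θ] is a |·|_θ-Cauchy sequence, then the sequence of infranorms {|α_i|_θ} is bounded: there exists C > 0 with |α_i|_θ ≤ C for all i. -/

import Mathlib

/-!
Write `x'` for the Galois conjugate of `x ∈ ℤ[θ]`, so that `(p + qθ)' = p - q(θ - a)`, as
`θ⁻¹ = θ - a`. Two facts link the infranorm with the size of conjugates.

* Conjugates of θ-integers are uniformly bounded (`Ztheta_conjBdd`): `|θ'| < 1`, so
  `∑ b_i θ'^i` is dominated by a geometric series.
* If `y ∈ ℤ[θ]` and `|y'| < 1`, then `y ∈ ℤ_θ` (`mem_Ztheta_of_conjBdd`). For `y ≥ 0` the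
  digits are found from the bottom up (`exists_rep`): the lowest digit `d` is read off from the
  position of `y'` in the window `(-1, θ)`, and `(y - d)/θ` is again a nonnegative element of
  `ℤ[θ]` with conjugate in that window.

If `(α_i)` is Cauchy, then for some `N` every `α_i - α_N` with `i ≥ N` is a θ-integer times a
nonnegative power of `θ`, so the conjugates of the `α_i` are bounded. Since multiplication by
`θ^L` divides conjugates by `θ^L` in absolute value, one exponent `L` gives
`θ^L α_i ∈ ℤ_θ`, that is `|α_i|_θ ≤ θ^L`, for all `i ≥ N`. The remaining terms are finitely many.
-/

noncomputable section

/-- The real quadratic unit `θ = (a + √(a²+4))/2`, the positive root of `θ² = aθ + 1`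
(the norm `N(θ) = −1` case). -/
def theta (a : ℕ) : ℝ := ((a : ℝ) + Real.sqrt ((a : ℝ) ^ 2 + 4)) / 2

/-- The Galois conjugate `θ' = −θ⁻¹`. -/
def thetaConj (a : ℕ) : ℝ := -(theta a)⁻¹

/-- Membership in the ring `ℤ[θ]`. -/
def inOK (a : ℕ) (x : ℝ) : Prop := ∃ p q : ℤ, x = (p : ℝ) + (q : ℝ) * theta a

/-- A finite integer sequence, supported in `[m, M]`, is admissible (norm `−1` case) if all its
entries lie in `{0, …, a}` and an entry equal to `a` is always followed (below) by a `0`. -/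
def AdmissibleOn (a : ℕ) (m M : ℤ) (b : ℤ → ℤ) : Prop :=
  (∀ i, b i ≠ 0 → m ≤ i ∧ i ≤ M) ∧
  (∀ i, 0 ≤ b i ∧ b i ≤ (a : ℤ)) ∧
  (∀ i, b i = (a : ℤ) → b (i - 1) = 0)

/-- The set `ℤ_θ` of θ-integers: signed sums `± Σ_{i=0}^{M} b_i θ^i` with `(b_i)` admissible. -/
def Ztheta (a : ℕ) : Set ℝ :=
  { x | ∃ (ε : ℤ) (M : ℤ) (b : ℤ → ℤ), (ε = 1 ∨ ε = -1) ∧ 0 ≤ M ∧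
      AdmissibleOn a 0 M b ∧
      x = (ε : ℝ) * ∑ i ∈ Finset.Icc (0 : ℤ) M, (b i : ℝ) * theta a ^ i }

/-- `v(x) = max { k : ℤ | x / θ^k ∈ ℤ_θ }` (as a supremum in `ℤ`). -/
def vval (a : ℕ) (x : ℝ) : ℤ := sSup { k : ℤ | x / theta a ^ k ∈ Ztheta a }

/-- The θ-adic infranorm `|x|_θ = θ^{−v(x)}`, with `|0|_θ = 0`. -/
def thNorm (a : ℕ) (x : ℝ) : ℝ := if x = 0 then 0 else theta a ^ (-vval a x)

/-- A sequence in `ℝ` is `|·|_θ`-Cauchy. -/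
def IsThCauchy (a : ℕ) (x : ℕ → ℝ) : Prop :=
  ∀ ε : ℝ, 0 < ε → ∃ N : ℕ, ∀ i j : ℕ, N ≤ i → N ≤ j → thNorm a (x i - x j) < ε

/-! ### The unit `θ` -/

lemma theta_sq (a : ℕ) : theta a * theta a = a * theta a + 1 := by
  have h := Real.mul_self_sqrt (show (0 : ℝ) ≤ (a : ℝ) ^ 2 + 4 by positivity)
  unfold theta
  linear_combination h / 4

lemma theta_gt (a : ℕ) : (a : ℝ) < theta a := by
  have h : (a : ℝ) < Real.sqrt ((a : ℝ) ^ 2 + 4) := Real.lt_sqrt_of_sq_lt (by linarith)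
  unfold theta
  linarith

lemma one_lt_theta {a : ℕ} (ha : 1 ≤ a) : 1 < theta a := by
  have h := theta_gt a
  have : (1 : ℝ) ≤ a := by exact_mod_cast ha
  linarith

lemma theta_irrational {a : ℕ} (ha : 1 ≤ a) : Irrational (theta a) := by
  -- `a² < a² + 4 < (a + 2)²`, and `a² + 4 = (a + 1)²` fails by parity.
  have hs : Irrational (Real.sqrt ((a ^ 2 + 4 : ℕ) : ℝ)) := by
    rw [irrational_sqrt_natCast_iff]
    rintro ⟨r, hr⟩
    have h1 : a < r := by nlinarith
    have h2 : r < a + 2 := by nlinarith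
    obtain rfl : r = a + 1 := by omega
    ring_nf at hr
    omega
  have h2 := (hs.natCast_add a).div_natCast (m := 2) (by norm_num)
  unfold theta
  push_cast at h2
  exact h2

/-! ### Bounds on conjugates -/

/-- `x` is an element of `ℤ[θ]` whose Galois conjugate has absolute value at most `B`. The
conjugate of `p + qθ` is written `p - q(θ - a)`, using `θ' = -θ⁻¹ = -(θ - a)`. -/
def ConjBdd (a : ℕ) (x B : ℝ) : Prop :=
  ∃ p q : ℤ, x = p + q * theta a ∧ |(p : ℝ) - q * (theta a - a)| ≤ B

lemma ConjBdd.mono {a : ℕ} {x B B' : ℝ} (h : ConjBdd a x B) (hB : B ≤ B') : ConjBdd a x B' := by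
  obtain ⟨p, q, h1, h2⟩ := h
  exact ⟨p, q, h1, h2.trans hB⟩

lemma ConjBdd.add {a : ℕ} {x y B B' : ℝ} (h : ConjBdd a x B) (h' : ConjBdd a y B') :
    ConjBdd a (x + y) (B + B') := by
  obtain ⟨p, q, h1, h2⟩ := h
  obtain ⟨r, s, h3, h4⟩ := h'
  refine ⟨p + r, q + s, by push_cast; rw [h1, h3]; ring, ?_⟩
  refine le_trans (le_of_eq ?_) ((abs_add_le _ _).trans (add_le_add h2 h4))
  push_cast
  congr 1
  ring

lemma ConjBdd.smul {a : ℕ} {x B : ℝ} (h : ConjBdd a x B) (c : ℤ) :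
    ConjBdd a (c * x) (|(c : ℝ)| * B) := by
  obtain ⟨p, q, h1, h2⟩ := h
  refine ⟨c * p, c * q, by push_cast; rw [h1]; ring, ?_⟩
  refine le_trans (le_of_eq ?_) (mul_le_mul_of_nonneg_left h2 (abs_nonneg (c : ℝ)))
  rw [← abs_mul]
  push_cast
  congr 1
  ring

lemma ConjBdd.theta_mul {a : ℕ} (ha : 1 ≤ a) {x B : ℝ} (h : ConjBdd a x B) :
    ConjBdd a (theta a * x) (B / theta a) := by
  obtain ⟨p, q, h1, h2⟩ := h
  have hs := theta_sq a
  have h0 : 0 < theta a := by linarith [one_lt_theta ha]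
  refine ⟨q, p + a * q, by push_cast; rw [h1]; linear_combination (q : ℝ) * hs, ?_⟩
  rw [le_div_iff₀ h0]
  refine le_trans (le_of_eq ?_) h2
  rw [← abs_of_pos h0, ← abs_mul, abs_of_pos h0, ← abs_neg]
  push_cast
  congr 1
  linear_combination ((p : ℝ) + a * q) * hs

lemma ConjBdd.theta_pow_mul {a : ℕ} (ha : 1 ≤ a) {x B : ℝ} (h : ConjBdd a x B) (n : ℕ) :
    ConjBdd a (theta a ^ n * x) (B / theta a ^ n) := by
  induction n with
  | zero => simpa using h
  | succ n ih =>
    have := ih.theta_mul ha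
    rwa [← mul_assoc, ← pow_succ', div_div, ← pow_succ] at this

lemma sum_Icc_eq (M : ℤ) (hM : 0 ≤ M) (f : ℤ → ℝ) :
    ∑ i ∈ Finset.Icc (0 : ℤ) M, f i = ∑ i ∈ Finset.range (M.toNat + 1), f i := by
  symm
  refine Finset.sum_bij (fun i _ => (i : ℤ)) ?_ ?_ ?_ ?_
  · intro i hi
    simp only [Finset.mem_range, Finset.mem_Icc] at *
    omega
  · intro i _ j _ h
    exact_mod_cast h
  · intro i hi
    simp only [Finset.mem_Icc] at hi
    exact ⟨i.toNat, by simp only [Finset.mem_range]; omega, Int.toNat_of_nonneg hi.1⟩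
  · intro i _
    rfl

lemma conjBdd_sum {a : ℕ} (ha : 1 ≤ a) (b : ℤ → ℤ) (hb : ∀ i, 0 ≤ b i ∧ b i ≤ (a : ℤ)) (n : ℕ) :
    ConjBdd a (∑ i ∈ Finset.range n, (b i : ℝ) * theta a ^ (i : ℤ))
      (∑ i ∈ Finset.range n, (a : ℝ) * (theta a)⁻¹ ^ i) := by
  induction n with
  | zero => exact ⟨0, 0, by simp, by simp⟩
  | succ n ih =>
    rw [Finset.sum_range_succ, Finset.sum_range_succ]
    refine ih.add ?_
    have h1 : ConjBdd a 1 1 := ⟨1, 0, by simp, by simp⟩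
    have h2 := (h1.theta_pow_mul ha n).smul (b n)
    rw [mul_one] at h2
    have h0 : 0 < theta a := by linarith [one_lt_theta ha]
    refine (by simpa using h2 : ConjBdd a _ _).mono ?_
    have hbn : |(b n : ℝ)| ≤ a := by
      rw [abs_of_nonneg (by exact_mod_cast (hb n).1)]
      exact_mod_cast (hb n).2
    rw [inv_pow]
    gcongr

lemma Ztheta_conjBdd {a : ℕ} (ha : 1 ≤ a) {x : ℝ} (hx : x ∈ Ztheta a) :
    ConjBdd a x (a * (1 - (theta a)⁻¹)⁻¹) := by
  obtain ⟨ε, M, b, hε, hM, hb, rfl⟩ := hx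
  have h1 := one_lt_theta ha
  rw [sum_Icc_eq M hM (fun i => (b i : ℝ) * theta a ^ i)]
  refine ((conjBdd_sum ha b hb.2.1 (M.toNat + 1)).smul ε).mono ?_
  have hε' : |(ε : ℝ)| = 1 := by rcases hε with rfl | rfl <;> simp
  rw [hε', one_mul, ← Finset.mul_sum]
  gcongr
  have hi : (theta a)⁻¹ < 1 := inv_lt_one_of_one_lt₀ h1
  have hp : 0 ≤ (theta a)⁻¹ := by positivity
  rw [← tsum_geometric_of_lt_one hp hi]
  exact (summable_geometric_of_lt_one hp hi).sum_le_tsum _ (fun i _ => by positivity)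

/-! ### Elements with small conjugate are θ-integers -/

/-- `y` is the value of an admissible expansion `∑ b_i θ^i`, `i ≥ 0`, with lowest digit
`b_0 = c`. -/
def HasRep (a : ℕ) (y : ℝ) (c : ℤ) : Prop :=
  ∃ (M : ℤ) (b : ℤ → ℤ), 0 ≤ M ∧ AdmissibleOn a 0 M b ∧
    y = ∑ i ∈ Finset.Icc (0 : ℤ) M, (b i : ℝ) * theta a ^ i ∧ b 0 = c

lemma HasRep.cons {a : ℕ} (ha : 1 ≤ a) {z : ℝ} {c d : ℤ} (h : HasRep a z c) (hd : 0 ≤ d)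
    (hda : d ≤ a) (hcd : c = a → d = 0) : HasRep a (d + theta a * z) d := by
  obtain ⟨M, b, hM, ⟨hb1, hb2, hb3⟩, rfl, rfl⟩ := h
  have h0 : theta a ≠ 0 := by linarith [one_lt_theta ha]
  refine ⟨M + 1, fun i => if i = 0 then d else b (i - 1), by omega, ⟨?_, ?_, ?_⟩, ?_, by simp⟩
  · intro i hi
    dsimp only at hi
    split_ifs at hi with h
    · omega
    · have := hb1 _ hi
      omega
  · intro i
    dsimp only
    split_ifs
    · exact ⟨hd, hda⟩
    · exact hb2 _
  · intro i hi
    dsimp only at hi ⊢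
    by_cases h : i = 0
    · subst h
      rw [if_neg (by norm_num)]
      by_contra hne
      have := hb1 _ hne
      omega
    · rw [if_neg h] at hi
      by_cases h' : i = 1
      · subst h'
        simpa using hcd (by simpa using hi)
      · rw [if_neg (by omega)]
        exact hb3 _ hi
  · rw [sum_Icc_eq M hM (fun i => (b i : ℝ) * theta a ^ i),
      sum_Icc_eq (M + 1) (by omega)
        (fun i => ((if i = 0 then d else b (i - 1) : ℤ) : ℝ) * theta a ^ i),
      show (M + 1).toNat = M.toNat + 1 by omega, Finset.sum_range_succ' _ (M.toNat + 1),
      Finset.mul_sum, add_comm]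
    congr 1
    · refine Finset.sum_congr rfl fun i _ => ?_
      rw [if_neg (by omega)]
      push_cast
      rw [add_sub_cancel_right, zpow_add_one₀ h0]
      ring
    · simp

/-- Nonnegative elements `y = p + qθ` with `-1 < y' < θ` are θ-integers. The lowest digit is `0`
for `y' < θ⁻¹`, and is `d ≥ 1` for `d - 1 + θ⁻¹ ≤ y' < d + θ⁻¹`; in particular it is `a` only
when `θ - 1 ≤ y'`, which is what makes the digit sequence admissible. -/
lemma exists_rep {a : ℕ} (ha : 1 ≤ a) (n : ℕ) : ∀ p q : ℤ, 0 ≤ p → 0 ≤ q → p + 2 * q ≤ n →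
    -1 < (p : ℝ) - q * (theta a - a) → (p : ℝ) - q * (theta a - a) < theta a →
    ∃ c, HasRep a (p + q * theta a) c ∧ (c = a → theta a - 1 ≤ (p : ℝ) - q * (theta a - a)) := by
  have hs := theta_sq a
  have hθ := one_lt_theta ha
  have hta := theta_gt a
  have haR : (1 : ℝ) ≤ a := by exact_mod_cast ha
  have hzero : HasRep a 0 0 :=
    ⟨0, fun _ => 0, le_rfl, ⟨by simp, by simp, by simp⟩, by simp, rfl⟩
  have ht1 : theta a - a < 1 := by nlinarith
  induction n with
  | zero =>
    intro p q hp hq hn _ _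
    obtain rfl : p = 0 := by push_cast at hn; omega
    obtain rfl : q = 0 := by push_cast at hn; omega
    refine ⟨0, by simpa using hzero, fun h => ?_⟩
    omega
  | succ n ih =>
    intro p q hp hq hn hlo hhi
    have hpR : (0 : ℝ) ≤ p := by exact_mod_cast hp
    have hqR : (0 : ℝ) ≤ q := by exact_mod_cast hq
    by_cases hpq : p = 0 ∧ q = 0
    · obtain ⟨rfl, rfl⟩ := hpq
      refine ⟨0, by simpa using hzero, fun h => ?_⟩
      omega
    -- The digit `d`, with its defining window for `y'`.
    obtain ⟨d, hd0, hup, hdn⟩ : ∃ d : ℤ, 0 ≤ d ∧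
        (p : ℝ) - q * (theta a - a) < d + (theta a - a) ∧
        (1 ≤ d → d - 1 + (theta a - a) ≤ (p : ℝ) - q * (theta a - a)) := by
      set w := (p : ℝ) - q * (theta a - a) with hw
      have h1 := Int.floor_le (w + 1 - (theta a - a))
      have h2 := Int.lt_floor_add_one (w + 1 - (theta a - a))
      rcases le_total 0 ⌊w + 1 - (theta a - a)⌋ with h | h
      · exact ⟨_, h, by linarith, fun _ => by linarith⟩
      · refine ⟨0, le_rfl, ?_, fun h => by omega⟩
        have : ((⌊w + 1 - (theta a - a)⌋ : ℤ) : ℝ) ≤ 0 := by exact_mod_cast h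
        push_cast
        linarith
    have hlo' : -1 < (p : ℝ) - q * (theta a - a) - d := by
      rcases hd0.eq_or_lt with h | h
      · rw [← h]
        push_cast
        linarith
      · have := hdn h
        linarith
    have hda : d ≤ a := by
      rcases hd0.eq_or_lt with h | h
      · omega
      · have := hdn h
        have h3 : (d : ℝ) < a + 1 := by linarith
        have h4 : d < a + 1 := by exact_mod_cast h3
        omega
    have hpd : d ≤ p := by
      rcases hd0.eq_or_lt with h | h
      · omega
      · have := hdn h
        have h3 : (d : ℝ) < p + 1 := by nlinarith
        have h4 : d < p + 1 := by exact_mod_cast h3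
        omega
    -- The conjugate of `z = (y - d)/θ` is `-θ (y' - d) = q - θ (p - d)`.
    have hz : ((q - a * (p - d) : ℤ) : ℝ) - ((p - d : ℤ) : ℝ) * (theta a - a)
        = - theta a * ((p : ℝ) - q * (theta a - a) - d) := by
      push_cast
      linear_combination (-(q : ℝ)) * hs
    have hzlo : -1 < ((q - a * (p - d) : ℤ) : ℝ) - ((p - d : ℤ) : ℝ) * (theta a - a) := by
      rw [hz]
      nlinarith
    have hzhi : ((q - a * (p - d) : ℤ) : ℝ) - ((p - d : ℤ) : ℝ) * (theta a - a) < theta a := by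
      rw [hz]
      nlinarith
    have hq' : 0 ≤ p - d := by omega
    have hq'R : (0 : ℝ) ≤ ((p - d : ℤ) : ℝ) := by exact_mod_cast hq'
    have hp' : 0 ≤ q - a * (p - d) := by
      have h3 : (-1 : ℝ) < ((q - a * (p - d) : ℤ) : ℝ) := by nlinarith
      have h4 : -1 < q - a * (p - d) := by exact_mod_cast h3
      omega
    have hqd : 0 < q + d := by
      by_contra hcon
      obtain rfl : q = 0 := by omega
      obtain rfl : d = 0 := by omega
      have h3 : (p : ℝ) < 1 := by
        push_cast at hup
        linarith
      have h4 : p < 1 := by exact_mod_cast h3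
      omega
    have hmeas : q - a * (p - d) + 2 * (p - d) ≤ n := by
      have h3 : (1 : ℤ) * (p - d) ≤ a * (p - d) :=
        mul_le_mul_of_nonneg_right (by exact_mod_cast ha) hq'
      push_cast at hn
      omega
    obtain ⟨c, hc, hca⟩ := ih _ _ hp' hq' hmeas hzlo hzhi
    refine ⟨d, ?_, ?_⟩
    · have := hc.cons ha hd0 hda ?_
      · convert this using 1
        push_cast
        linear_combination (-((p : ℝ) - d)) * hs
      · intro hc'
        by_contra hne
        have h1 := hdn (by omega)
        have h2 := hca hc'
        rw [hz] at h2
        -- The two bounds leave only the endpoint of the window of `d`, and `θ` would be rational.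
        have h3 : (p : ℝ) - q * (theta a - a) - d ≤ (theta a - a) - 1 := by
          by_contra hcon
          push Not at hcon
          nlinarith
        have h4 : ((q + 1 : ℤ) : ℝ) * theta a = ((p - d + 1 + a * (q + 1) : ℤ) : ℝ) := by
          push_cast
          linarith
        have h5 := (theta_irrational ha).intCast_mul (m := q + 1) (by omega)
        rw [h4] at h5
        exact h5.ne_int _ rfl
    · intro hd
      have h1 := hdn (by omega)
      rw [hd] at h1
      push_cast at h1
      linarith

lemma HasRep.mem {a : ℕ} {y : ℝ} {c : ℤ} (h : HasRep a y c) : y ∈ Ztheta a ∧ -y ∈ Ztheta a := by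
  obtain ⟨M, b, hM, hb, rfl, -⟩ := h
  exact ⟨⟨1, M, b, Or.inl rfl, hM, hb, by simp⟩, ⟨-1, M, b, Or.inr rfl, hM, hb, by simp⟩⟩

lemma rep_of_nonneg {a : ℕ} (ha : 1 ≤ a) {y B : ℝ} (h : ConjBdd a y B) (hB : B < 1)
    (hy : 0 ≤ y) : ∃ c, HasRep a y c := by
  obtain ⟨p, q, rfl, h2⟩ := h
  have hθ := one_lt_theta ha
  have hta := theta_gt a
  have h3 := abs_lt.mp (h2.trans_lt hB)
  -- `y - y' = q (θ + θ⁻¹)` exceeds `-1`, so `q ≥ 0`, and then `p = y' + q θ⁻¹ > -1`.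
  have hq : 0 ≤ q := by
    by_contra hcon
    have : (q : ℝ) ≤ -1 := by exact_mod_cast (by omega : q ≤ -1)
    nlinarith
  have hqR : (0 : ℝ) ≤ q := by exact_mod_cast hq
  have hp : 0 ≤ p := by
    have h4 : (-1 : ℝ) < p := by nlinarith
    have h5 : -1 < p := by exact_mod_cast h4
    omega
  obtain ⟨c, hc, -⟩ := exists_rep ha (p + 2 * q).toNat p q hp hq (by omega) h3.1 (by linarith)
  exact ⟨c, hc⟩

lemma mem_Ztheta_of_conjBdd {a : ℕ} (ha : 1 ≤ a) {y B : ℝ} (h : ConjBdd a y B) (hB : B < 1) :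
    y ∈ Ztheta a := by
  rcases le_total 0 y with hy | hy
  · obtain ⟨c, hc⟩ := rep_of_nonneg ha h hB hy
    exact hc.mem.1
  · have h' : ConjBdd a (-y) B := by simpa using h.smul (-1)
    obtain ⟨c, hc⟩ := rep_of_nonneg ha h' hB (by linarith)
    simpa using hc.mem.2

/-! ### The infranorm and conjugates -/

lemma thNorm_nonneg {a : ℕ} (ha : 1 ≤ a) (x : ℝ) : 0 ≤ thNorm a x := by
  have := one_lt_theta ha
  unfold thNorm
  split_ifs <;> positivity

lemma conjBdd_of_thNorm_lt_one {a : ℕ} (ha : 1 ≤ a) {x : ℝ} (hx : thNorm a x < 1) :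
    ConjBdd a x (a * (1 - (theta a)⁻¹)⁻¹) := by
  have hθ := one_lt_theta ha
  have hi : (theta a)⁻¹ < 1 := inv_lt_one_of_one_lt₀ hθ
  have hB : 0 ≤ (a : ℝ) * (1 - (theta a)⁻¹)⁻¹ :=
    mul_nonneg (by positivity) (inv_nonneg.mpr (by linarith))
  unfold thNorm at hx
  split_ifs at hx with h0
  · exact ⟨0, 0, by simp [h0], by simpa using hB⟩
  have hv : 0 < vval a x := by
    by_contra hcon
    have := one_le_zpow₀ hθ.le (show 0 ≤ -vval a x by omega)
    linarith
  -- A nonzero supremum in `ℤ` is not a junk value, so it is attained.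
  have hne : {k : ℤ | x / theta a ^ k ∈ Ztheta a}.Nonempty := by
    by_contra hcon
    rw [Set.not_nonempty_iff_eq_empty] at hcon
    rw [vval, hcon, Int.csSup_empty] at hv
    exact lt_irrefl _ hv
  have hbd : BddAbove {k : ℤ | x / theta a ^ k ∈ Ztheta a} := by
    by_contra hcon
    rw [vval, Int.csSup_of_not_bddAbove hcon] at hv
    exact lt_irrefl _ hv
  have hmem : x / theta a ^ vval a x ∈ Ztheta a := Int.csSup_mem hne hbd
  obtain ⟨n, hn⟩ := Int.eq_ofNat_of_zero_le hv.le
  rw [hn, zpow_natCast] at hmem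
  have h1 := (Ztheta_conjBdd ha hmem).theta_pow_mul ha n
  rw [mul_div_cancel₀ x (by positivity)] at h1
  exact h1.mono (div_le_self hB (one_le_pow₀ hθ.le))

lemma thNorm_le_of_conjBdd {a : ℕ} (ha : 1 ≤ a) {x B : ℝ} (h : ConjBdd a x B) {L : ℕ}
    (hL : B < theta a ^ L) : thNorm a x ≤ theta a ^ L := by
  have hθ := one_lt_theta ha
  have hmem : theta a ^ L * x ∈ Ztheta a :=
    mem_Ztheta_of_conjBdd ha (h.theta_pow_mul ha L) ((div_lt_one (by positivity)).mpr hL)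
  have hk : (-(L : ℤ)) ∈ {k : ℤ | x / theta a ^ k ∈ Ztheta a} := by
    simpa [mul_comm] using hmem
  have hv : -(L : ℤ) ≤ vval a x := by
    by_cases hbd : BddAbove {k : ℤ | x / theta a ^ k ∈ Ztheta a}
    · exact le_csSup hbd hk
    · rw [vval, Int.csSup_of_not_bddAbove hbd]
      omega
  unfold thNorm
  split_ifs
  · positivity
  · rw [← zpow_natCast]
    exact zpow_le_zpow_right₀ hθ.le (by omega)

/-- If `{α_i} ⊆ ℤ[θ]` is a `|·|_θ`-Cauchy sequence, then the sequence of
infranorms `{|α_i|_θ}` is bounded: there is `C > 0` with `|α_i|_θ ≤ C` for all `i`. -/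
theorem cauchy_norm_bounded (a : ℕ) (ha : 1 ≤ a) (α : ℕ → ℝ)
    (hα : ∀ i, inOK a (α i)) (hc : IsThCauchy a α) :
    ∃ C : ℝ, 0 < C ∧ ∀ i, thNorm a (α i) ≤ C := by
  have hθ := one_lt_theta ha
  obtain ⟨N, hN⟩ := hc 1 one_pos
  obtain ⟨p, q, hpq⟩ := hα N
  have hαN : ConjBdd a (α N) |(p : ℝ) - q * (theta a - a)| := ⟨p, q, hpq, le_rfl⟩
  obtain ⟨L, hL⟩ := pow_unbounded_of_one_lt
    (a * (1 - (theta a)⁻¹)⁻¹ + |(p : ℝ) - q * (theta a - a)|) hθ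
  have hsum : 0 ≤ ∑ j ∈ Finset.range N, thNorm a (α j) :=
    Finset.sum_nonneg fun j _ => thNorm_nonneg ha _
  have hpow : 0 < theta a ^ L := by positivity
  refine ⟨theta a ^ L + ∑ j ∈ Finset.range N, thNorm a (α j), by positivity, fun i => ?_⟩
  rcases lt_or_ge i N with hi | hi
  · have := Finset.single_le_sum (f := fun j => thNorm a (α j))
      (fun j _ => thNorm_nonneg ha _) (Finset.mem_range.mpr hi)
    linarith
  · have h1 := (conjBdd_of_thNorm_lt_one ha (hN i N hi le_rfl)).add hαN
    rw [sub_add_cancel] at h1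
    have := thNorm_le_of_conjBdd ha h1 hL
    linarith
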